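/- arXiv:1705.04471 — 2 statements merged into one kernel-verified Lean document; each statement's English description precedes it below -/
import Mathlib

section
/- Let n = p₁⋯p_r ∈ A be square-free monic with distinct monic irreducible factors p_i, let ζ_i ∈ L be a fixed root of p_i, and let χ₁ := ∏_{i=1}^r χ_{ζ_i}^{j_i} and χ₂ := ∏_{i=1}^r χ_{ζ_i}^{k_i} be Dirichlet characters modulo n with 1 ≤ j_i, k_i < |p_i| − 1 for all i. Let χ₁χ₂ := ∏_{i=1}^r χ_{ζ_i}^{m_i}, where m_i ∈ {0, 1, …, |p_i| − 2} is the unique representative of j_i + k_i modulo |p_i| − 1. Then for every δ ∈ A with deg δ < deg n, the convolution sum ∑_{a ∈ A, deg a < deg n} χ₁(a)·χ₂(δ − a) equals (χ₁χ₂)(δ) · ∏_{i=1}^r (−1)^{1 − j_i} · C(k_i, |p_i| − 1 − j_i), where C(k, l) denotes the binomial coefficient (taken to be 0 when l > k) reduced into L, and (−1)^{1−j_i} is computed in L. -/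
open Polynomial

noncomputable section

/-- The polynomial of degree `< d` with coefficient vector `c : Fin d → F`.
As `c` ranges over all of `Fin d → F`, this ranges exactly over the polynomials
of degree `< d` (each exactly once). -/
def toPoly {F : Type} [Field F] {d : ℕ} (c : Fin d → F) : Polynomial F :=
  ∑ i : Fin d, Polynomial.C (c i) * Polynomial.X ^ (i : ℕ)

/-- Power sums over a finite field. -/
theorem sum_pow_pos {K : Type} [Field K] [Fintype K] (i : ℕ) (hi : i ≠ 0) :
    ∑ x : K, x ^ i = if Fintype.card K - 1 ∣ i then -1 else 0 := by
  classical
  rw [← FiniteField.sum_pow_units K i]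
  let φ : Kˣ ↪ K := ⟨fun x ↦ x, Units.val_injective⟩
  have h : Finset.univ.map φ = Finset.univ \ {0} := by
    ext x
    simpa only [Finset.mem_map, Finset.mem_univ, Function.Embedding.coeFn_mk, true_and,
      Finset.mem_sdiff, Finset.mem_singleton, φ] using! isUnit_iff_ne_zero
  calc
    ∑ x : K, x ^ i = ∑ x ∈ Finset.univ \ {(0 : K)}, x ^ i := by
      rw [← Finset.sum_sdiff ({0} : Finset K).subset_univ, Finset.sum_singleton, zero_pow hi,
        add_zero]
    _ = ∑ x : Kˣ, (x ^ i : K) := by simp [φ, ← h, Finset.univ.sum_map φ]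

theorem neg_one_pow_card_sub_one {K : Type} [Field K] [Fintype K] :
    (-1 : K) ^ (Fintype.card K - 1) = 1 :=
  FiniteField.pow_card_sub_one_eq_one _ (neg_ne_zero.mpr one_ne_zero)

/-- The Jacobi sum over a finite field. -/
theorem jacobi_local {K : Type} [Field K] [Fintype K] (j k : ℕ)
    (hj : 1 ≤ j ∧ j < Fintype.card K - 1) (hk : 1 ≤ k ∧ k < Fintype.card K - 1) (d : K) :
    ∑ a : K, a ^ j * (d - a) ^ k = d ^ ((j + k) % (Fintype.card K - 1))
      * ((-1 : K) ^ ((1 : ℤ) - (j : ℤ)) * (Nat.choose k (Fintype.card K - 1 - j) : K)) := by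
  have hQ := neg_one_pow_card_sub_one (K := K)
  have hS := sum_pow_pos (K := K)
  generalize Fintype.card K - 1 = Q at *
  have h1 : ∀ a : K, a ^ j * (d - a) ^ k =
      ∑ l ∈ Finset.range (k + 1), ((-1) ^ l * d ^ (k - l) * (k.choose l : K)) * a ^ (j + l) := by
    intro a
    rw [show d - a = (-a) + d by ring, add_pow, Finset.mul_sum]
    refine Finset.sum_congr rfl fun l _ => ?_
    rw [neg_pow a l, pow_add]
    ring
  simp_rw [h1]
  rw [Finset.sum_comm]
  simp_rw [← Finset.mul_sum]
  have h2 : ∀ l ∈ Finset.range (k + 1),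
      ((-1) ^ l * d ^ (k - l) * (k.choose l : K)) * ∑ a : K, a ^ (j + l) =
      if l = Q - j then -((-1) ^ l * d ^ (k - l) * (k.choose l : K)) else 0 := by
    intro l hl
    rw [Finset.mem_range] at hl
    rw [hS _ (by omega)]
    by_cases h : l = Q - j
    · rw [if_pos h, if_pos (by rw [h, Nat.add_sub_cancel' hj.2.le])]
      ring
    · rw [if_neg h, if_neg, mul_zero]
      rintro ⟨c, hc⟩
      have : c < 2 := by
        by_contra hc2
        have : Q * 2 ≤ Q * c := Nat.mul_le_mul_left _ (by omega)
        omega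
      interval_cases c <;> omega
  rw [Finset.sum_congr rfl h2, Finset.sum_ite_eq']
  have hsign : (-1 : K) ^ ((1 : ℤ) - (j : ℤ)) = -((-1) ^ (Q - j)) := by
    have hm : (-1 : K) ≠ 0 := neg_ne_zero.mpr one_ne_zero
    rw [zpow_sub₀ hm, zpow_one, zpow_natCast, div_eq_iff (pow_ne_zero _ hm), neg_mul, ← pow_add,
      Nat.sub_add_cancel hj.2.le, hQ]
  split_ifs with h
  · rw [Finset.mem_range] at h
    have hmod : (j + k) % Q = k - (Q - j) := by
      rw [Nat.mod_eq_sub_mod (by omega), Nat.mod_eq_of_lt (by omega)]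
      omega
    rw [hmod, hsign]
    ring
  · rw [Finset.mem_range] at h
    rw [Nat.choose_eq_zero_of_lt (by omega)]
    simp

theorem toPoly_degree_lt {F : Type} [Field F] {d : ℕ} (c : Fin d → F) :
    (toPoly c).degree < d := by
  unfold toPoly
  refine (Polynomial.degree_sum_le _ _).trans_lt ?_
  refine (Finset.sup_lt_iff (WithBot.bot_lt_coe d)).2 ?_
  intro i _
  exact (Polynomial.degree_C_mul_X_pow_le _ _).trans_lt (WithBot.coe_lt_coe.2 i.2)

theorem toPoly_coeff {F : Type} [Field F] {d : ℕ} (c : Fin d → F) (i : Fin d) :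
    (toPoly c).coeff i = c i := by
  unfold toPoly
  rw [Polynomial.finsetSum_coeff, Finset.sum_eq_single i]
  · simp
  · intro b _ hb
    rw [Polynomial.coeff_C_mul_X_pow, if_neg]
    exact fun h => hb (Fin.ext h.symm)
  · simp

/-- Convolution of two Dirichlet characters of the same square-free conductor
`n = p₁⋯p_r` (function-field Jacobi sums):
`∑_{deg a < deg n} χ₁(a) χ₂(δ − a) = (χ₁χ₂)(δ) ∏_i (−1)^{1−j_i} C(k_i, |p_i|−1−j_i)`. -/
theorem stmt4 {F : Type} [Field F] [Fintype F] {L : Type} [Field L] [Algebra F L]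
    {r : ℕ} (p : Fin r → Polynomial F) (ζ : Fin r → L)
    (hp : ∀ i, (p i).Monic ∧ Irreducible (p i))
    (hdist : ∀ i i', i ≠ i' → p i ≠ p i')
    (hζ : ∀ i, Polynomial.aeval (ζ i) (p i) = 0)
    (n : Polynomial F) (hn : n = ∏ i, p i)
    (j k : Fin r → ℕ)
    (hj : ∀ i, 1 ≤ j i ∧ j i < Fintype.card F ^ (p i).natDegree - 1)
    (hk : ∀ i, 1 ≤ k i ∧ k i < Fintype.card F ^ (p i).natDegree - 1)
    (δ : Polynomial F) (hδ : δ.degree < n.degree) :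
    ∑ c : Fin n.natDegree → F,
        (∏ i, Polynomial.aeval (ζ i) (toPoly c) ^ j i)
          * (∏ i, Polynomial.aeval (ζ i) (δ - toPoly c) ^ k i)
      = (∏ i, Polynomial.aeval (ζ i) δ
            ^ ((j i + k i) % (Fintype.card F ^ (p i).natDegree - 1)))
        * ∏ i, ((-1 : L) ^ ((1 : ℤ) - (j i : ℤ))
            * (Nat.choose (k i) (Fintype.card F ^ (p i).natDegree - 1 - j i) : L)) := by
  classical
  have hirr : ∀ i, Fact (Irreducible (p i)) := fun i => ⟨(hp i).2⟩
  have hfin : ∀ i, Module.Finite F (AdjoinRoot (p i)) := fun i =>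
    (AdjoinRoot.powerBasis' (hp i).1).finite
  have hfin' : ∀ i, Finite (AdjoinRoot (p i)) := fun i => Module.finite_of_finite F
  let ft : ∀ i, Fintype (AdjoinRoot (p i)) := fun i => Fintype.ofFinite _
  have hcard : ∀ i, Fintype.card (AdjoinRoot (p i)) = Fintype.card F ^ (p i).natDegree := by
    intro i
    rw [Module.card_eq_pow_finrank (K := F), (AdjoinRoot.powerBasis' (hp i).1).finrank,
      AdjoinRoot.powerBasis'_dim]
  have hnm : n.Monic := hn ▸ Polynomial.monic_prod_of_monic _ _ fun i _ => (hp i).1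
  have hnd : n.natDegree = ∑ i, (p i).natDegree := by
    rw [hn, Polynomial.natDegree_prod_of_monic _ _ fun i _ => (hp i).1]
  let Φ : (Fin n.natDegree → F) → ∀ i, AdjoinRoot (p i) :=
    fun c i => AdjoinRoot.mk (p i) (toPoly c)
  have hΦ : Function.Bijective Φ := by
    rw [Fintype.bijective_iff_injective_and_card]
    constructor
    · intro c c' h
      have hdvd : n ∣ toPoly c - toPoly c' := by
        refine hn.dvd.trans ?_
        refine Finset.prod_dvd_of_coprime ?_ ?_
        · intro i _ i' _ hne
          refine ((hp i).2.coprime_iff_not_dvd).2 fun hd => hdist i i' hne ?_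
          exact Polynomial.eq_of_monic_of_associated (hp i).1 (hp i').1
            ((hp i).2.associated_of_dvd (hp i').2 hd)
        · intro i _
          exact AdjoinRoot.mk_eq_mk.1 (congrFun h i)
      have h0 : toPoly c - toPoly c' = 0 := by
        refine Polynomial.eq_zero_of_dvd_of_degree_lt hdvd ?_
        rw [Polynomial.degree_eq_natDegree hnm.ne_zero]
        exact (Polynomial.degree_sub_le _ _).trans_lt
          (max_lt (toPoly_degree_lt c) (toPoly_degree_lt c'))
      funext i
      rw [← toPoly_coeff c i, ← toPoly_coeff c' i, sub_eq_zero.1 h0]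
    · rw [Fintype.card_pi, Fintype.card_pi]
      simp only [hcard]
      rw [Finset.prod_pow_eq_pow_sum, ← hnd]
      simp
  let ψ : ∀ i, AdjoinRoot (p i) →+* L := fun i =>
    AdjoinRoot.lift (algebraMap F L) (ζ i) (hζ i)
  have hψ : ∀ i a, Polynomial.aeval (ζ i) a = ψ i (AdjoinRoot.mk (p i) a) := by
    intro i a
    exact (AdjoinRoot.lift_mk (hζ i) a).symm
  have hloc : ∀ i, ∑ x : AdjoinRoot (p i),
      ψ i x ^ j i * (Polynomial.aeval (ζ i) δ - ψ i x) ^ k i =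
      Polynomial.aeval (ζ i) δ ^ ((j i + k i) % (Fintype.card F ^ (p i).natDegree - 1)) *
      ((-1 : L) ^ ((1 : ℤ) - (j i : ℤ))
            * (Nat.choose (k i) (Fintype.card F ^ (p i).natDegree - 1 - j i) : L)) := by
    intro i
    have h := congrArg (ψ i) (jacobi_local (K := AdjoinRoot (p i)) (j i) (k i)
      (by rw [hcard]; exact hj i) (by rw [hcard]; exact hk i) (AdjoinRoot.mk (p i) δ))
    rw [hcard] at h
    simpa [hψ, map_sum, map_mul, map_pow, map_sub, map_zpow₀] using h
  rw [← Finset.prod_mul_distrib]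
  simp_rw [← hloc]
  rw [Finset.prod_univ_sum, Fintype.piFinset_univ]
  rw [← hΦ.sum_comp]
  refine Finset.sum_congr rfl fun c _ => ?_
  rw [← Finset.prod_mul_distrib]
  refine Finset.prod_congr rfl fun i _ => ?_
  simp only [Φ, ← hψ, map_sub]
end
end

section
/- Let n ∈ A be monic and let q ∈ A be monic irreducible with q coprime to n, and choose q* ∈ A with q·q* ≡ 1 (mod n). For α ∈ A with deg α < deg n, write α·q* = k*·n + r* with k*, r* ∈ A and deg r* < deg n. Then α·(1 − q·q*)/n ∈ A, and one has the matrix identity (n α; 0 n)·(q 0; 0 1) = (1, α(1 − qq*)/n; 0, 1)·(q 0; 0 1)·(1 k*; 0 1)·(n r*; 0 n) in GL₂(K); the assignment α ↦ r* is a bijection of {α ∈ A : deg α < deg n} onto itself sending 0 to 0; and for every Dirichlet character χ modulo a square-free monic divisor of n with χ(q) ≠ 0 one has χ(q)·χ(r*) = χ(α). -/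
open Polynomial Matrix

noncomputable section

/-- The inclusion of matrices over `A = 𝔽_q[θ]` into matrices over `K = 𝔽_q(θ)`. -/
def mat2K {F : Type} [Field F] (γ : Matrix (Fin 2) (Fin 2) (Polynomial F)) :
    Matrix (Fin 2) (Fin 2) (RatFunc F) :=
  γ.map (algebraMap (Polynomial F) (RatFunc F))

/-- Let `n` be monic, `q` monic irreducible coprime to `n`, and `q·q* ≡ 1 (mod n)`.
Writing `α·q* = k*·n + r*` with `deg r* < deg n` (so `r* = R α`), one has
`α(1 − qq*)/n ∈ A` (say `= v`) and the matrix identity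
`(n α; 0 n)(q 0; 0 1) = (1 v; 0 1)(q 0; 0 1)(1 k*; 0 1)(n r*; 0 n)` in `GL₂(K)`;
`α ↦ r*` is a bijection of `{α : deg α < deg n}` onto itself sending `0` to `0`; and for
every Dirichlet character `χ` modulo a square-free monic divisor of `n` with `χ(q) ≠ 0`
one has `χ(q)·χ(r*) = χ(α)`. -/
theorem stmt12 {F : Type} [Field F] [Fintype F] {L : Type} [Field L] [Algebra F L]
    (n : Polynomial F) (hn : n.Monic)
    (q : Polynomial F) (hq : q.Monic) (hqirr : Irreducible q)
    (hcop : IsCoprime q n)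
    (qstar : Polynomial F) (hqstar : n ∣ (q * qstar - 1)) :
    ∃ R : Polynomial F → Polynomial F,
      (∀ α : Polynomial F, α.degree < n.degree →
        ∃ k v : Polynomial F,
          (R α).degree < n.degree ∧ α * qstar = k * n + R α
          ∧ α * (1 - q * qstar) = n * v
          ∧ mat2K !![n, α; 0, n] * mat2K !![q, 0; 0, 1]
              = mat2K !![1, v; 0, 1] * mat2K !![q, 0; 0, 1] * mat2K !![1, k; 0, 1]
                * mat2K !![n, R α; 0, n])
      ∧ R 0 = 0
      ∧ Set.BijOn R {α : Polynomial F | α.degree < n.degree}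
          {α : Polynomial F | α.degree < n.degree}
      ∧ (∀ (s : ℕ) (p : Fin s → Polynomial F) (ζ : Fin s → L) (e : Fin s → ℕ),
          (∀ i, (p i).Monic ∧ Irreducible (p i)) →
          (∀ i i', i ≠ i' → p i ≠ p i') →
          (∀ i, Polynomial.aeval (ζ i) (p i) = 0) →
          (∀ i, e i < Fintype.card F ^ (p i).natDegree - 1) →
          (∏ i, p i) ∣ n →
          (∏ i, Polynomial.aeval (ζ i) q ^ e i) ≠ 0 →
          ∀ α : Polynomial F, α.degree < n.degree →
            (∏ i, Polynomial.aeval (ζ i) q ^ e i)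
                * (∏ i, Polynomial.aeval (ζ i) (R α) ^ e i)
              = ∏ i, Polynomial.aeval (ζ i) α ^ e i) := by
  obtain ⟨c, hc⟩ := hqstar
  have hdeg : ∀ a : Polynomial F, (a %ₘ n).degree < n.degree :=
    fun a => Polynomial.degree_modByMonic_lt a hn
  have hdiv : ∀ a : Polynomial F, a %ₘ n + n * (a /ₘ n) = a :=
    fun a => Polynomial.modByMonic_add_div a n
  have hself : ∀ a : Polynomial F, a.degree < n.degree → a %ₘ n = a :=
    fun a ha => (Polynomial.modByMonic_eq_self_iff hn).2 ha
  have hcongr : ∀ a b : Polynomial F, n ∣ a - b → a %ₘ n = b %ₘ n := by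
    intro a b h
    have h0 := (Polynomial.modByMonic_eq_zero_iff_dvd hn).2 h
    rw [Polynomial.sub_modByMonic] at h0
    exact sub_eq_zero.1 h0
  refine ⟨fun α => (α * qstar) %ₘ n, ?_, ?_, ⟨?_, ?_, ?_⟩, ?_⟩
  · intro α hα
    refine ⟨(α * qstar) /ₘ n, -(α * c), hdeg _, ?_, ?_, ?_⟩
    · linear_combination -(hdiv (α * qstar))
    · linear_combination -α * hc
    · simp only [mat2K, ← Matrix.map_mul]
      congr 1
      have h := hdiv (α * qstar)
      simp only [Matrix.mul_fin_two]
      ext i j : 1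
      fin_cases i <;> fin_cases j
      · simp; try ring
      · simp
        linear_combination -q * h - α * hc
      · simp
      · simp
  · simp
  · intro α _
    exact hdeg _
  · intro a ha b hb hab
    simp only [Set.mem_setOf_eq] at ha hb
    simp only at hab
    have h1 := hdiv (a * qstar)
    have h2 := hdiv (b * qstar)
    rw [← hself a ha, ← hself b hb]
    apply hcongr
    refine ⟨q * ((a * qstar) /ₘ n - (b * qstar) /ₘ n) - (a - b) * c, ?_⟩
    linear_combination q * hab - q * h1 + q * h2 - (a - b) * hc
  · intro b hb
    simp only [Set.mem_setOf_eq] at hb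
    refine ⟨(b * q) %ₘ n, hdeg _, ?_⟩
    simp only
    conv_rhs => rw [← hself b hb]
    apply hcongr
    have h1 := hdiv (b * q)
    refine ⟨b * c - (b * q) /ₘ n * qstar, ?_⟩
    linear_combination qstar * h1 + b * hc
  · intro s p ζ e _ _ hζ _ hpn _ α _
    rw [← Finset.prod_mul_distrib]
    refine Finset.prod_congr rfl fun i _ => ?_
    rw [← mul_pow, ← map_mul]
    congr 1
    have hn0 : Polynomial.aeval (ζ i) n = 0 := by
      obtain ⟨d, hd⟩ := (Finset.dvd_prod_of_mem p (Finset.mem_univ i)).trans hpn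
      rw [hd, map_mul, hζ i, zero_mul]
    have h1 := hdiv (α * qstar)
    have h2 : q * ((α * qstar) %ₘ n) = α + n * (α * c - q * ((α * qstar) /ₘ n)) := by
      linear_combination q * h1 + α * hc
    simp only
    rw [h2, map_add, map_mul, hn0, zero_mul, add_zero]
end
end
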